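/- Let n < 2k ≤ 2n. Then for every position x of Nim^=_{n,k} and every integer g with 0 ≤ g < T_{n,k}(x), there exists a move x → x' such that T_{n,k}(x') = g. -/

import Mathlib

/-- A move in Exact k-Nim `Nim^=_{n,k}`: all piles weakly decrease and
exactly `k` piles strictly decrease. -/
def ExactMove (n k : ℕ) (x x' : Fin n → ℕ) : Prop :=
  (∀ i, x' i ≤ x i) ∧ (Finset.univ.filter fun i => x' i < x i).card = k

/-- There is a chain of `m` consecutive moves starting at `x`. -/
def HasChain (n k : ℕ) (x : Fin n → ℕ) (m : ℕ) : Prop :=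
  ∃ f : Fin (m + 1) → Fin n → ℕ, f 0 = x ∧
    ∀ i : Fin m, ExactMove n k (f i.castSucc) (f i.succ)

/-- The Tetris function `T_{n,k}(x)`: the maximum number of consecutive moves
that can be made starting from `x`. -/
noncomputable def tetris (n k : ℕ) (x : Fin n → ℕ) : ℕ :=
  sSup {m | HasChain n k x m}

/-!
Taking one token from a pile `j` shortens the longest play by at most one: play as before, except
for omitting the first move (if any) that lowers pile `j`. Among the moves from `x` to a position
that still admits `g` moves, take one whose target `y` is minimal. If `y` admitted `g + 1` moves,
then, as `n < 2 * k`, its first move would share a pile `j` with the move from `x` to `y`. Pile `j`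
of `y` is then nonempty, so the move from `x` could take one more token from it and still leave `g`
moves, contradicting minimality.
-/

section

open Finset

variable {n k m m' : ℕ} {x y z : Fin n → ℕ} {j : Fin n}

namespace ExactMove

theorem lt (h : ExactMove n k x y) (hk : 0 < k) : y < x := by
  obtain ⟨j, hj⟩ := card_pos.mp (h.2.symm ▸ hk)
  exact Pi.lt_def.mpr ⟨h.1, j, (mem_filter.mp hj).2⟩

theorem of_lt_iff_lt {x' y' : Fin n → ℕ} (h : ExactMove n k x y) (hle : y' ≤ x')
    (hlt : ∀ i, y' i < x' i ↔ y i < x i) : ExactMove n k x' y' :=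
  ⟨hle, by simpa only [hlt] using h.2⟩

theorem exists_le_of_le (h : ExactMove n k x y) (hxz : x ≤ z) :
    ∃ w, ExactMove n k z w ∧ y ≤ w := by
  refine ⟨fun i => if y i < x i then y i else z i,
    h.of_lt_iff_lt (fun i => ?_) fun i => ?_, fun i => ?_⟩ <;>
  · have hyx : y i ≤ x i := h.1 i
    have hxz : x i ≤ z i := hxz i
    beta_reduce
    split_ifs <;> omega

theorem sub_single_right (h : ExactMove n k x y) (hj : y j < x j) :
    ExactMove n k x (y - Pi.single j 1) := by
  refine h.of_lt_iff_lt (tsub_le_self.trans h.1) fun i => ?_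
  obtain rfl | hij := eq_or_ne i j
  · simp only [Pi.sub_apply, Pi.single_eq_same]
    omega
  · simp [hij]

theorem sub_single_of_eq (h : ExactMove n k x y) (hj : y j = x j) :
    ExactMove n k (x - Pi.single j 1) (y - Pi.single j 1) := by
  refine h.of_lt_iff_lt (tsub_le_tsub_right h.1 _) fun i => ?_
  obtain rfl | hij := eq_or_ne i j
  · simp [hj]
  · simp [hij]

theorem exists_lt_lt (hxy : ExactMove n k x y) (hyz : ExactMove n k y z) (hn : n < 2 * k) :
    ∃ j, z j < y j ∧ y j < x j := by
  have hcard : #(univ : Finset (Fin n)) < #{i | z i < y i} + #{i | y i < x i} := by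
    rw [hyz.2, hxy.2, card_fin]
    omega
  obtain ⟨j, hj⟩ :=
    inter_nonempty_of_card_lt_card_add_card (subset_univ _) (subset_univ _) hcard
  exact ⟨j, by simpa using hj⟩

end ExactMove

theorem hasChain_zero : HasChain n k x 0 :=
  ⟨fun _ => x, rfl, fun i => i.elim0⟩

theorem hasChain_succ_iff :
    HasChain n k x (m + 1) ↔ ∃ y, ExactMove n k x y ∧ HasChain n k y m := by
  constructor
  · rintro ⟨f, rfl, hf⟩
    exact ⟨f 1, hf 0, fun i => f i.succ, rfl, fun i => hf i.succ⟩
  · rintro ⟨y, hxy, f, rfl, hf⟩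
    exact ⟨Fin.cons x f, rfl, Fin.cases hxy hf⟩

namespace HasChain

theorem of_length_le (h : HasChain n k x m') (hm : m ≤ m') : HasChain n k x m := by
  obtain ⟨f, hf₀, hf⟩ := h
  exact ⟨fun i => f (i.castLE (by omega)), hf₀, fun i => hf (i.castLE hm)⟩

theorem of_le (h : HasChain n k x m) (hxz : x ≤ z) : HasChain n k z m := by
  induction m generalizing x z with
  | zero => exact hasChain_zero
  | succ m ih =>
    obtain ⟨y, hxy, hy⟩ := hasChain_succ_iff.mp h
    obtain ⟨w, hzw, hyw⟩ := hxy.exists_le_of_le hxz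
    exact hasChain_succ_iff.mpr ⟨w, hzw, ih hy hyw⟩

theorem sub_single (h : HasChain n k x (m + 1)) (j : Fin n) :
    HasChain n k (x - Pi.single j 1) m := by
  induction m generalizing x with
  | zero => exact hasChain_zero
  | succ m ih =>
    obtain ⟨y, hxy, hy⟩ := hasChain_succ_iff.mp h
    obtain hj | hj := (hxy.1 j).lt_or_eq
    · refine hy.of_le fun i => ?_
      obtain rfl | hij := eq_or_ne i j
      · simpa using Nat.le_sub_one_of_lt hj
      · simpa [hij] using hxy.1 i
    · exact hasChain_succ_iff.mpr ⟨_, hxy.sub_single_of_eq hj, ih hy⟩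

theorem le_sum (h : HasChain n k x m) (hk : 0 < k) : m ≤ ∑ i, x i := by
  induction m generalizing x with
  | zero => exact Nat.zero_le _
  | succ m ih =>
    obtain ⟨y, hxy, hy⟩ := hasChain_succ_iff.mp h
    exact (ih hy).trans_lt (Fintype.sum_strictMono (hxy.lt hk))

end HasChain

theorem hasChain_iff_le_tetris (hk : 0 < k) : HasChain n k x m ↔ m ≤ tetris n k x := by
  have hbdd : BddAbove {m | HasChain n k x m} := ⟨∑ i, x i, fun _ h => h.le_sum hk⟩
  have hmax : HasChain n k x (tetris n k x) := Nat.sSup_mem ⟨0, hasChain_zero⟩ hbdd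
  exact ⟨fun h => le_csSup hbdd h, hmax.of_length_le⟩

end

/-- For `n < 2k ≤ 2n`, from every position `x` and for every `g < T_{n,k}(x)` there
is a move `x → x'` with `T_{n,k}(x') = g`. -/
theorem exists_move_tetris_eq (n k : ℕ) (hkn : k ≤ n) (hn : n < 2 * k)
    (x : Fin n → ℕ) (g : ℕ) (hg : g < tetris n k x) :
    ∃ x' : Fin n → ℕ, ExactMove n k x x' ∧ tetris n k x' = g := by
  have hk : 0 < k := by omega
  obtain ⟨y₀, hy₀⟩ := hasChain_succ_iff.mp ((hasChain_iff_le_tetris hk).mpr hg)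
  obtain ⟨y, ⟨hxy, hyg⟩, hmin⟩ := exists_minimal_of_wellFoundedLT
    (fun y => ExactMove n k x y ∧ HasChain n k y g) ⟨y₀, hy₀⟩
  refine ⟨y, hxy, le_antisymm (not_lt.mp fun hlt => ?_) ((hasChain_iff_le_tetris hk).mp hyg)⟩
  have hchain : HasChain n k y (g + 1) := (hasChain_iff_le_tetris hk).mpr hlt
  obtain ⟨z, hyz, -⟩ := hasChain_succ_iff.mp hchain
  obtain ⟨j, hzy, hyx⟩ := hxy.exists_lt_lt hyz hn
  have hle : y j ≤ y j - 1 := by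
    simpa using hmin ⟨hxy.sub_single_right hyx, hchain.sub_single j⟩ tsub_le_self j
  omega
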